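/- arXiv:2603.28018 — 4 statements merged into one kernel-verified Lean document; each statement's English description precedes it below -/
import Mathlib

section
/- Let K ≥ 1, let τ_1 ≤ τ_2 ≤ ⋯ ≤ τ_K be real numbers, let n_1, …, n_K ≥ 0, let R > 0, and let r_1, …, r_K : ℝ → ℝ be measurable functions with r_i(t) ≥ 0 for all t, r_i(t) = 0 for t < τ_i, and ∑_{i=1}^K r_i(t) ≤ R for all t. Suppose D ≥ 0 is such that ∫_{τ_i}^{τ_i + D} r_i(t) dt ≥ n_i for every i ∈ {1,…,K}. Then for every k ∈ {1,…,K}, writing S_k = ∑_{i=1}^k n_i, it holds that S_k ≤ R·(D + τ_k − τ_1). -/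
/-!
Since the handover times are sorted, for `i ≤ k` the window `[τ i, τ i + D]` lies in
`[τ 0, τ k + D]` (indices start at `0`), and rates are nonnegative, so the whole amount `n i` is at
most the integral of `r i` over that common window. Summing over `i ≤ k` and exchanging sum and
integral bounds the cumulative amount by the integral of a total rate that never exceeds `R`, over
an interval of length `D + τ k - τ 0`.
-/

open MeasureTheory intervalIntegral

/-- Feasibility inequality (23) in the proof of Proposition 2: if every UE `i`'s
remaining amount `n i` is delivered within `[τ i, τ i + D]` under the shared
backhaul capacity `R`, then for every `k` the cumulative amount
`S_k = ∑_{i ≤ k} n i` satisfies `S_k ≤ R (D + τ_k − τ_1)`. -/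
theorem backhaul_feasibility_ineq
    {K : ℕ} (hK : 0 < K)
    (τ : Fin K → ℝ) (hτ : Monotone τ)
    (n : Fin K → ℝ) (hn : ∀ i, 0 ≤ n i)
    (R : ℝ) (hR : 0 < R)
    (r : Fin K → ℝ → ℝ)
    (hmeas : ∀ i, Measurable (r i))
    (hpos : ∀ i t, 0 ≤ r i t)
    (hzero : ∀ i t, t < τ i → r i t = 0)
    (hcap : ∀ t, ∑ i : Fin K, r i t ≤ R)
    (D : ℝ) (hD : 0 ≤ D)
    (hdeliver : ∀ i, n i ≤ ∫ t in (τ i)..(τ i + D), r i t) :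
    ∀ k : Fin K, ∑ i ∈ Finset.Iic k, n i ≤ R * (D + τ k - τ ⟨0, hK⟩) := by
  intro k
  have hle : ∀ i t, r i t ≤ R := fun i t =>
    (Finset.single_le_sum (f := fun j => r j t) (fun j _ => hpos j t) (Finset.mem_univ i)).trans
      (hcap t)
  -- Each rate takes values in `[0, R]`, so it is integrable on every bounded interval.
  have hint : ∀ i a b, IntervalIntegrable (r i) volume a b := fun i a b =>
    (intervalIntegrable_const (c := R)).mono_fun (hmeas i).aestronglyMeasurable
      (Filter.Eventually.of_forall fun t => by
        simpa [Real.norm_eq_abs, abs_of_nonneg (hpos i t), abs_of_pos hR] using hle i t)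
  have h0 : ∀ i, τ ⟨0, hK⟩ ≤ τ i := fun i => hτ (Fin.mk_le_of_le_val (Nat.zero_le _))
  calc ∑ i ∈ Finset.Iic k, n i
      ≤ ∑ i ∈ Finset.Iic k, ∫ t in (τ ⟨0, hK⟩)..(τ k + D), r i t := by
        refine Finset.sum_le_sum fun i hi => (hdeliver i).trans ?_
        have hik : τ i ≤ τ k := hτ (Finset.mem_Iic.mp hi)
        exact integral_mono_interval (h0 i) (by linarith) (by linarith)
          (Filter.Eventually.of_forall (hpos i)) (hint i _ _)
    _ = ∫ t in (τ ⟨0, hK⟩)..(τ k + D), ∑ i ∈ Finset.Iic k, r i t :=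
        (integral_finsetSum fun i _ => hint i _ _).symm
    _ ≤ ∫ _ in (τ ⟨0, hK⟩)..(τ k + D), R := by
        refine integral_mono_on (by linarith [h0 k]) ?_ intervalIntegrable_const fun t _ =>
          (Finset.sum_le_univ_sum_of_nonneg fun i => hpos i t).trans (hcap t)
        simpa only [Finset.sum_fn] using IntervalIntegrable.sum (Finset.Iic k) fun i _ => hint i _ _
    _ = R * (D + τ k - τ ⟨0, hK⟩) := by
        rw [intervalIntegral.integral_const, smul_eq_mul]
        ring
end

section
/- Let K ≥ 1, let τ_1 ≤ τ_2 ≤ ⋯ ≤ τ_K be real numbers, let n_1, …, n_K ≥ 0, let R > 0, and let r_1, …, r_K : ℝ → ℝ be measurable functions with r_i(t) ≥ 0 for all t, r_i(t) = 0 for t < τ_i, and ∑_{i=1}^K r_i(t) ≤ R for all t. Suppose D ≥ 0 is such that ∫_{τ_i}^{τ_i + D} r_i(t) dt ≥ n_i for every i ∈ {1,…,K}. Then D ≥ max_{1 ≤ k ≤ K} max( S_k/R − (τ_k − τ_1), 0 ), where S_k = ∑_{i=1}^k n_i. -/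
/-!
The first `k` users must receive `S_k` tokens in total, and each of their delivery windows
`[τ i, τ i + D]` lies inside `[τ 1, τ k + D]` because `τ` is monotone. At total rate at most
`R`, that interval carries at most `R * (τ k + D - τ 1)` tokens, so
`S_k ≤ R * (τ k + D - τ 1)`; dividing by `R` gives the bound. The index `⟨0, hK⟩`
plays the role of the first user.
-/

open MeasureTheory intervalIntegral

/-- Converse (lower bound) direction of Proposition 2: every feasible deadline
offset `D` satisfies `D ≥ max_k [S_k / R − (τ_k − τ_1)]⁺`, where
`S_k = ∑_{i ≤ k} n i`. -/
theorem backhaul_delay_lower_bound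
    {K : ℕ} (hK : 0 < K)
    (τ : Fin K → ℝ) (hτ : Monotone τ)
    (n : Fin K → ℝ) (hn : ∀ i, 0 ≤ n i)
    (R : ℝ) (hR : 0 < R)
    (r : Fin K → ℝ → ℝ)
    (hmeas : ∀ i, Measurable (r i))
    (hpos : ∀ i t, 0 ≤ r i t)
    (hzero : ∀ i t, t < τ i → r i t = 0)
    (hcap : ∀ t, ∑ i : Fin K, r i t ≤ R)
    (D : ℝ) (hD : 0 ≤ D)
    (hdeliver : ∀ i, n i ≤ ∫ t in (τ i)..(τ i + D), r i t) :
    (Finset.univ.sup' (Finset.univ_nonempty_iff.mpr ⟨⟨0, hK⟩⟩)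
      (fun k : Fin K =>
        max ((∑ i ∈ Finset.Iic k, n i) / R - (τ k - τ ⟨0, hK⟩)) 0)) ≤ D := by
  refine Finset.sup'_le _ _ fun k _ => max_le ?_ hD
  have hle : ∀ i t, r i t ≤ R := fun i t =>
    (Finset.single_le_sum (fun j _ => hpos j t) (Finset.mem_univ i)).trans (hcap t)
  -- Integrability is needed: otherwise the integrals take the junk value `0`.
  have hint : ∀ i a b, IntervalIntegrable (r i) volume a b := fun i a b =>
    (intervalIntegrable_const (c := R)).mono_fun (hmeas i).aestronglyMeasurable
      (Filter.Eventually.of_forall fun t => by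
        beta_reduce
        rw [Real.norm_of_nonneg (hpos i t), Real.norm_of_nonneg hR.le]
        exact hle i t)
  have hτ0 : ∀ i, τ ⟨0, hK⟩ ≤ τ i := fun i => hτ (Fin.mk_le_of_le_val (Nat.zero_le _))
  have hS : ∑ i ∈ Finset.Iic k, n i ≤ R * (τ k + D - τ ⟨0, hK⟩) := calc
    ∑ i ∈ Finset.Iic k, n i
      ≤ ∑ i ∈ Finset.Iic k, ∫ t in (τ ⟨0, hK⟩)..(τ k + D), r i t := by
        refine Finset.sum_le_sum fun i hi => (hdeliver i).trans ?_
        have hik : τ i ≤ τ k := hτ (Finset.mem_Iic.mp hi)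
        exact integral_mono_interval (hτ0 i) (by linarith) (by linarith)
          (Filter.Eventually.of_forall (hpos i)) (hint i _ _)
    _ = ∫ t in (τ ⟨0, hK⟩)..(τ k + D), ∑ i ∈ Finset.Iic k, r i t :=
        (integral_finsetSum fun i _ => hint i _ _).symm
    _ ≤ ∫ _ in (τ ⟨0, hK⟩)..(τ k + D), R := by
        refine integral_mono_on (by linarith [hτ0 k]) ?_ intervalIntegrable_const fun t _ => ?_
        · simpa only [Finset.sum_fn] using
            IntervalIntegrable.sum (Finset.Iic k) fun i _ => hint i (τ ⟨0, hK⟩) (τ k + D)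
        · exact (Finset.sum_le_sum_of_subset_of_nonneg (Finset.subset_univ _)
            fun i _ _ => hpos i t).trans (hcap t)
    _ = R * (τ k + D - τ ⟨0, hK⟩) := by
        rw [intervalIntegral.integral_const, smul_eq_mul, mul_comm]
  have hdiv := (div_le_iff₀' hR).mpr hS
  linarith
end

section
/- Let K ≥ 1, let τ_1 ≤ τ_2 ≤ ⋯ ≤ τ_K be real numbers, let n_1, …, n_K ≥ 0, let R > 0, and write S_k = ∑_{i=1}^k n_i with S_0 = 0. Assume the backlog condition S_{j−1} ≥ R·(τ_j − τ_1) for every j ∈ {2,…,K}. Define T_0 = τ_1 and T_k = max(τ_k, T_{k−1}) + n_k/R for k ≥ 1. Then: (i) T_k = τ_1 + S_k/R for all k ∈ {1,…,K}; (ii) the rate functions r_k(t) = R·𝟙[T_{k−1} ≤ t < T_k] satisfy r_k(t) = 0 for t < τ_k, ∑_{k=1}^K r_k(t) ≤ R for all t, and ∫_{τ_k}^{T_k} r_k(t) dt = n_k for each k; and (iii) max_{1 ≤ k ≤ K} (T_k − τ_k) = max_{1 ≤ k ≤ K} ( S_k/R − (τ_k − τ_1) ), and this quantity is nonnegative. 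-/
/-!
Under the backlog condition the closed form `τ 0 + S k / R` of `T k` dominates the release time
`τ k`, so the maximum in the recursion for `T (k + 1)` is always `T k`, and the closed form
propagates by induction. Everything else follows from `τ k ≤ T k ≤ T (k + 1)`: the service
windows `[T k, T (k + 1))` start after release, tile `[T 0, T K)` without overlap (so the rates
add up to at most `R`), and have length `n k / R`. The maximum delay is nonnegative because
the first user's delay `n 0 / R` is.
-/

open MeasureTheory intervalIntegral

/-- Achievability direction of Proposition 2 via the constructive sequential
full-rate scheduling policy (Section III-C). UEs are 0-indexed: UE `k` has
release time `τ k` and amount `n k` for `k < K`, `S k = ∑_{i < k} n i`, the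
backlog condition reads `S j ≥ R (τ j − τ 0)` for `1 ≤ j < K`, and the
completion times satisfy `T 0 = τ 0`, `T (k+1) = max (τ k) (T k) + n k / R`. -/
theorem backhaul_sequential_schedule_achievability
    {K : ℕ} (hK : 0 < K)
    (τ : ℕ → ℝ) (hτ : ∀ i j : ℕ, i ≤ j → j < K → τ i ≤ τ j)
    (n : ℕ → ℝ) (hn : ∀ i, i < K → 0 ≤ n i)
    (R : ℝ) (hR : 0 < R)
    (hbacklog : ∀ j, 1 ≤ j → j < K →
      R * (τ j - τ 0) ≤ ∑ i ∈ Finset.range j, n i)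
    (T : ℕ → ℝ) (hT0 : T 0 = τ 0)
    (hTrec : ∀ k, k < K → T (k + 1) = max (τ k) (T k) + n k / R) :
    -- (i) closed form of the completion times
    (∀ k, k < K → T (k + 1) = τ 0 + (∑ i ∈ Finset.range (k + 1), n i) / R) ∧
    -- (ii) the induced rate functions are feasible and deliver each amount
    (∀ r : ℕ → ℝ → ℝ,
      (r = fun k t => if T k ≤ t ∧ t < T (k + 1) then R else 0) →
      (∀ k, k < K → ∀ t, t < τ k → r k t = 0) ∧
      (∀ t, ∑ k ∈ Finset.range K, r k t ≤ R) ∧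
      (∀ k, k < K → (∫ t in (τ k)..(T (k + 1)), r k t) = n k)) ∧
    -- (iii) the worst-user delay equals the lower bound and is nonnegative
    ((Finset.range K).sup' (Finset.nonempty_range_iff.mpr hK.ne')
        (fun k => T (k + 1) - τ k)
      = (Finset.range K).sup' (Finset.nonempty_range_iff.mpr hK.ne')
        (fun k => (∑ i ∈ Finset.range (k + 1), n i) / R - (τ k - τ 0)) ∧
     0 ≤ (Finset.range K).sup' (Finset.nonempty_range_iff.mpr hK.ne')
        (fun k => (∑ i ∈ Finset.range (k + 1), n i) / R - (τ k - τ 0))) := by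
  have hrel : ∀ k, k < K → T k = τ 0 + (∑ i ∈ Finset.range k, n i) / R → τ k ≤ T k := by
    intro k hk hTk
    rcases Nat.eq_zero_or_pos k with rfl | hpos
    · exact hT0.ge
    · have h : τ k - τ 0 ≤ (∑ i ∈ Finset.range k, n i) / R := by
        rw [le_div_iff₀ hR, mul_comm]
        exact hbacklog k hpos hk
      linarith
  have hclosed : ∀ k, k ≤ K → T k = τ 0 + (∑ i ∈ Finset.range k, n i) / R := by
    intro k
    induction k with
    | zero => intro _; simp [hT0]
    | succ k ih =>
      intro hk
      have hTk := ih (by omega)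
      rw [hTrec k hk, max_eq_right (hrel k hk hTk), hTk, Finset.sum_range_succ, add_div]
      ring
  have hτT : ∀ k, k < K → τ k ≤ T k := fun k hk => hrel k hk (hclosed k hk.le)
  have hstep : ∀ k, k < K → T (k + 1) = T k + n k / R := fun k hk => by
    rw [hTrec k hk, max_eq_right (hτT k hk)]
  have hmono : ∀ k, k < K → T k ≤ T (k + 1) := fun k hk => by
    have := div_nonneg (hn k hk) hR.le
    linarith [hstep k hk]
  refine ⟨fun k hk => hclosed (k + 1) hk, ?_, ?_, ?_⟩
  · rintro r rfl
    refine ⟨?_, ?_, ?_⟩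
    · intro k hk t ht
      exact if_neg fun h => absurd (hτT k hk) (by linarith [h.1])
    · intro t
      -- The windows of the first `m` users tile `[T 0, T m)`, so their rates telescope.
      have htile : ∀ m, m ≤ K → T 0 ≤ T m ∧
          ∑ k ∈ Finset.range m, (if T k ≤ t ∧ t < T (k + 1) then R else 0)
            = if T 0 ≤ t ∧ t < T m then R else 0 := by
        intro m
        induction m with
        | zero =>
          intro _
          refine ⟨le_rfl, ?_⟩
          rw [Finset.sum_range_zero, if_neg fun h => absurd h.2 (not_lt.mpr h.1)]
        | succ m ih =>
          intro hm
          obtain ⟨h0, hs⟩ := ih (by omega)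
          have h1 := hmono m hm
          refine ⟨h0.trans h1, ?_⟩
          rw [Finset.sum_range_succ, hs]
          grind
      refine (htile K le_rfl).2.le.trans ?_
      split_ifs
      exacts [le_rfl, hR.le]
    · intro k hk
      have h1 := hτT k hk
      have h2 := hmono k hk
      have hind : (fun t => if T k ≤ t ∧ t < T (k + 1) then R else 0)
          = (Set.Ico (T k) (T (k + 1))).indicator fun _ => R := by
        funext t
        simp [Set.indicator_apply]
      -- Half-open intervals closed on the left contain the whole service window.
      rw [intervalIntegral.integral_of_le (h1.trans h2), integral_Ioc_eq_integral_Ioo,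
        ← integral_Ico_eq_integral_Ioo]
      simp only [hind]
      rw [setIntegral_indicator measurableSet_Ico,
        Set.inter_eq_self_of_subset_right (Set.Ico_subset_Ico_left h1), setIntegral_const,
        Real.volume_real_Ico_of_le h2, smul_eq_mul, hstep k hk]
      field_simp
      ring
  · refine Finset.sup'_congr _ rfl fun k hk => ?_
    rw [hclosed (k + 1) (Finset.mem_range.mp hk)]
    ring
  · refine Finset.le_sup'_of_le _ (Finset.mem_range.mpr hK) ?_
    simpa using div_nonneg (hn 0 hK) hR.le
end

section
/- Let K ≥ 1, let τ_1 ≤ τ_2 ≤ ⋯ ≤ τ_K be real numbers, let n_1, …, n_K ≥ 0, let R > 0, and write S_k = ∑_{i=1}^k n_i with S_0 = 0. Assume the backlog condition S_{j−1} ≥ R·(τ_j − τ_1) for every j ∈ {2,…,K}. Consider the set 𝒟 of all D ≥ 0 for which there exist measurable functions r_1, …, r_K : ℝ → ℝ with r_i(t) ≥ 0, r_i(t) = 0 for t < τ_i, ∑_{i=1}^K r_i(t) ≤ R for all t, and ∫_{τ_i}^{τ_i + D} r_i(t) dt ≥ n_i for every i. Then the infimum of 𝒟 is attained and equals max_{1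 ≤ k ≤ K} ( S_k/R − (τ_k − τ_1) ). -/
open MeasureTheory intervalIntegral

/-!
Let `S k` be the total load of UEs `0, …, k`, with `S (-1) = 0`.

*Lower bound.* If `D` is feasible, the windows `[τ i, τ i + D]` with `i ≤ k` all lie in
`[τ 0, τ k + D]`. The backhaul carries at most `R * (τ k + D - τ 0)` tokens on that interval, and it
has to carry `S k` (`load_le_of_feasible`).

*Attainment.* Serve the UEs one after the other at full rate: UE `i` gets rate `R` exactly on
`(τ 0 + S (i-1) / R, τ 0 + S i / R]`. The service slots are disjoint, so the capacity is respected.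
The backlog condition says that the slot of UE `i` starts no earlier than `τ i`, and
`D ≥ S i / R - (τ i - τ 0)` says that it ends no later than `τ i + D`.
-/

lemma sum_Iic_eq_sum_Iio_add {K : ℕ} (n : Fin K → ℝ) (k : Fin K) :
    ∑ i ∈ Finset.Iic k, n i = (∑ i ∈ Finset.Iio k, n i) + n k := by
  rw [← Finset.Iio_insert, Finset.sum_insert (by simp), add_comm]

lemma sum_Iic_le_sum_Iio {K : ℕ} {n : Fin K → ℝ} (hn : ∀ i, 0 ≤ n i) {i j : Fin K} (h : i < j) :
    ∑ l ∈ Finset.Iic i, n l ≤ ∑ l ∈ Finset.Iio j, n l :=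
  Finset.sum_le_sum_of_subset_of_nonneg
    (fun _ hl => Finset.mem_Iio.2 ((Finset.mem_Iic.1 hl).trans_lt h)) (fun l _ _ => hn l)

/-- Capacity bound: deliveries to UEs `0, …, k` only count inside `[τ 0, τ k + D]`. -/
lemma load_le_of_feasible {K : ℕ} (hK : 0 < K) {τ : Fin K → ℝ} (hτ : Monotone τ)
    {n : Fin K → ℝ} {R D : ℝ} (hD : 0 ≤ D) {r : Fin K → ℝ → ℝ}
    (hm : ∀ i, Measurable (r i)) (h0 : ∀ i t, 0 ≤ r i t) (hs : ∀ t, ∑ i : Fin K, r i t ≤ R)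
    (hd : ∀ i, n i ≤ ∫ t in (τ i)..(τ i + D), r i t) (k : Fin K) :
    ∑ i ∈ Finset.Iic k, n i ≤ R * (τ k + D - τ ⟨0, hK⟩) := by
  have hle : ∀ i t, r i t ≤ R := fun i t =>
    (Finset.single_le_sum (fun j _ => h0 j t) (Finset.mem_univ i)).trans (hs t)
  have hint : ∀ i a b, IntervalIntegrable (r i) volume a b := fun i a b =>
    (intervalIntegrable_const (c := R)).mono_fun (hm i).aestronglyMeasurable
      (Filter.Eventually.of_forall fun t => by
        simpa only [Real.norm_eq_abs, abs_of_nonneg (h0 i t)] using (hle i t).trans (le_abs_self R))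
  have hmin : ∀ i, τ ⟨0, hK⟩ ≤ τ i := fun i => hτ (Fin.mk_le_of_le_val (Nat.zero_le _))
  calc ∑ i ∈ Finset.Iic k, n i
      ≤ ∑ i ∈ Finset.Iic k, ∫ t in (τ ⟨0, hK⟩)..(τ k + D), r i t := by
        refine Finset.sum_le_sum fun i hi => (hd i).trans ?_
        have hik := hτ (Finset.mem_Iic.1 hi)
        exact integral_mono_interval (hmin i) (by linarith) (by linarith)
          (Filter.Eventually.of_forall (h0 i)) (hint i _ _)
    _ = ∫ t in (τ ⟨0, hK⟩)..(τ k + D), ∑ i ∈ Finset.Iic k, r i t :=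
        (integral_finsetSum fun i _ => hint i _ _).symm
    _ ≤ ∫ _ in (τ ⟨0, hK⟩)..(τ k + D), R := by
        refine integral_mono_on (by linarith [hmin k]) ?_ intervalIntegrable_const fun t _ => ?_
        · simpa only [Finset.sum_fn] using
            IntervalIntegrable.sum (Finset.Iic k) fun i _ => hint i _ _
        · exact (Finset.sum_le_sum_of_subset_of_nonneg (Finset.subset_univ _)
            fun i _ _ => h0 i t).trans (hs t)
    _ = R * (τ k + D - τ ⟨0, hK⟩) := by
        rw [intervalIntegral.integral_const, smul_eq_mul, mul_comm]


/-- Proposition 2 (both directions): under the backlog condition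
`S_{j-1} ≥ R (τ_j − τ_1)`, the minimum feasible worst-user cache-transfer
deadline offset is attained and equals `max_k (S_k / R − (τ_k − τ_1))`. -/
theorem min_feasible_transfer_delay
    {K : ℕ} (hK : 0 < K)
    (τ : Fin K → ℝ) (hτ : Monotone τ)
    (n : Fin K → ℝ) (hn : ∀ i, 0 ≤ n i)
    (R : ℝ) (hR : 0 < R)
    (hbacklog : ∀ j : Fin K, 0 < (j : ℕ) →
      R * (τ j - τ ⟨0, hK⟩) ≤ ∑ i ∈ Finset.Iio j, n i) :
    IsLeast
      {D : ℝ | 0 ≤ D ∧ ∃ r : Fin K → ℝ → ℝ,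
        (∀ i, Measurable (r i)) ∧
        (∀ i t, 0 ≤ r i t) ∧
        (∀ i t, t < τ i → r i t = 0) ∧
        (∀ t, ∑ i : Fin K, r i t ≤ R) ∧
        (∀ i, n i ≤ ∫ t in (τ i)..(τ i + D), r i t)}
      (Finset.univ.sup' (Finset.univ_nonempty_iff.mpr ⟨⟨0, hK⟩⟩)
        (fun k : Fin K =>
          (∑ i ∈ Finset.Iic k, n i) / R - (τ k - τ ⟨0, hK⟩))) := by
  constructor
  · set D := Finset.univ.sup' (Finset.univ_nonempty_iff.mpr ⟨⟨0, hK⟩⟩)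
        (fun k : Fin K =>
          (∑ i ∈ Finset.Iic k, n i) / R - (τ k - τ ⟨0, hK⟩)) with hDdef
    have hDk : ∀ k : Fin K, (∑ i ∈ Finset.Iic k, n i) / R - (τ k - τ ⟨0, hK⟩) ≤ D := fun k =>
      Finset.le_sup' (fun k : Fin K =>
        (∑ i ∈ Finset.Iic k, n i) / R - (τ k - τ ⟨0, hK⟩)) (Finset.mem_univ k)
    have hD : 0 ≤ D := by
      refine le_trans ?_ (hDk ⟨0, hK⟩)
      rw [sub_self, sub_zero]
      exact div_nonneg (Finset.sum_nonneg fun i _ => hn i) hR.le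
    -- `a i` and `b i` are the start and the end of the service slot of UE `i`.
    let a : Fin K → ℝ := fun i => τ ⟨0, hK⟩ + (∑ l ∈ Finset.Iio i, n l) / R
    let b : Fin K → ℝ := fun i => τ ⟨0, hK⟩ + (∑ l ∈ Finset.Iic i, n l) / R
    have hba : ∀ i, b i - a i = n i / R := fun i => by
      simp only [a, b, sum_Iic_eq_sum_Iio_add]
      ring
    have hab : ∀ i, a i ≤ b i := fun i => by
      have := div_nonneg (hn i) hR.le
      linarith [hba i]
    have hτa : ∀ i, τ i ≤ a i := fun i => by
      rcases Nat.eq_zero_or_pos (i : ℕ) with hi | hi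
      · obtain rfl : i = ⟨0, hK⟩ := Fin.ext hi
        exact le_add_of_nonneg_right (div_nonneg (Finset.sum_nonneg fun i _ => hn i) hR.le)
      · have : τ i - τ ⟨0, hK⟩ ≤ (∑ l ∈ Finset.Iio i, n l) / R := by
          rw [le_div_iff₀ hR, mul_comm]
          exact hbacklog i hi
        simp only [a]
        linarith
    have hbD : ∀ i, b i ≤ τ i + D := fun i => by
      have := hDk i
      simp only [b]
      linarith
    have hdisj : ∀ i j, i < j → b i ≤ a j := fun i j hij => by
      have := div_le_div_of_nonneg_right (sum_Iic_le_sum_Iio hn hij) hR.le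
      simp only [a, b]
      linarith
    let r : Fin K → ℝ → ℝ := fun i => (Set.Ioc (a i) (b i)).indicator fun _ => R
    have hr0 : ∀ i t, 0 ≤ r i t := fun i t => Set.indicator_nonneg (fun _ _ => hR.le) t
    refine ⟨hD, r, fun i => measurable_const.indicator measurableSet_Ioc, hr0,
      fun i t ht => ?_, fun t => ?_, fun i => ?_⟩
    · exact Set.indicator_of_notMem (fun h => absurd h.1 (by linarith [hτa i])) _
    · by_cases h : ∃ i, t ∈ Set.Ioc (a i) (b i)
      · obtain ⟨i, hi⟩ := h
        rw [Finset.sum_eq_single_of_mem i (Finset.mem_univ i)]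
        · exact (Set.indicator_of_mem hi _).le
        · intro j _ hji
          refine Set.indicator_of_notMem (fun hj => ?_) _
          rcases lt_or_gt_of_ne hji with h | h
          · linarith [hdisj _ _ h, hi.1, hj.2]
          · linarith [hdisj _ _ h, hj.1, hi.2]
      · push Not at h
        rw [Finset.sum_eq_zero fun i _ => Set.indicator_of_notMem (h i) _]
        exact hR.le
    · have hslot : ∫ t in (a i)..(b i), r i t = n i := by
        rw [integral_of_le (hab i), setIntegral_congr_fun (g := fun _ => R) measurableSet_Ioc
          (fun t ht => Set.indicator_of_mem ht _), ← integral_of_le (hab i), intervalIntegral.integral_const,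
          hba, smul_eq_mul, div_mul_cancel₀ _ hR.ne']
      have hint : IntervalIntegrable (r i) volume (τ i) (τ i + D) :=
        ⟨(integrable_const R).indicator measurableSet_Ioc,
          (integrable_const R).indicator measurableSet_Ioc⟩
      rw [← hslot]
      exact integral_mono_interval (hτa i) (hab i) (hbD i)
        (Filter.Eventually.of_forall (hr0 i)) hint
  · rintro D ⟨hD, r, hm, h0, -, hs, hd⟩
    refine Finset.sup'_le _ _ fun k _ => ?_
    have := load_le_of_feasible hK hτ hD hm h0 hs hd k
    rw [mul_comm, ← div_le_iff₀ hR] at this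
    linarith
end
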